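/- Let k ≥ 2 and n ≥ 2k+1. Let E = {{i, n+1} : k+1 ≤ i ≤ n−k}, the set of k-relevant pairs of the (n+1)-gon containing the vertex n+1, and let φ be the map sending a pair {i,j} with i<j to {i, j−1}. Then the map sending T to {φ(e) : e ∈ T, e ⊆ {1,…,n}, e is k-relevant in the (n+1)-gon} ∪ {pairs of {1,…,n−1} of length at most k−1 with respect to n−1} is a bijection from the set of k-triangulations of the (n+1)-gon containing E onto the set of (k−1)-triangulations of the (n−1)-gon. -/

import Mathlib

open scoped BigOperators

/-- A pair `{i,j}` of distinct vertices of the `n`-gon.  Vertices `1,…,n` are represented by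
`Fin n` (vertex `i` corresponds to `i-1 : Fin n`), and a pair is recorded with its endpoints
in increasing order. -/
abbrev Pair (n : ℕ) := {p : Fin n × Fin n // p.1 < p.2}

/-- Two pairs `{i,j}` (`i<j`) and `{k,l}` (`k<l`) cross if `i<k<j<l` or `k<i<l<j`. -/
def Cross {n : ℕ} (e f : Pair n) : Prop :=
  (e.val.1 < f.val.1 ∧ f.val.1 < e.val.2 ∧ e.val.2 < f.val.2) ∨
  (f.val.1 < e.val.1 ∧ e.val.1 < f.val.2 ∧ f.val.2 < e.val.2)

/-- A set of pairs is `(k+1)`-crossing-free if it contains no `k+1` pairwise crossing pairs. -/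
def CrossingFree (n k : ℕ) (S : Set (Pair n)) : Prop :=
  ¬ ∃ C : Finset (Pair n), ↑C ⊆ S ∧ C.card = k + 1 ∧
      ∀ e ∈ C, ∀ f ∈ C, e ≠ f → Cross e f

/-- A `k`-triangulation of the `n`-gon: an inclusion-maximal `(k+1)`-crossing-free set. -/
def IsTriangulation (n k : ℕ) (T : Set (Pair n)) : Prop :=
  CrossingFree n k T ∧ ∀ S : Set (Pair n), CrossingFree n k S → T ⊆ S → S = T

/-- The length of a pair `{i,j}` with respect to the `N`-gon: `min (j-i) (N-(j-i))`. -/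
def pairLen (N : ℕ) {n : ℕ} (e : Pair n) : ℕ :=
  min ((e.val.2 : ℕ) - (e.val.1 : ℕ)) (N - ((e.val.2 : ℕ) - (e.val.1 : ℕ)))

/-- A pair is `k`-relevant in the `N`-gon if its length is at least `k+1`. -/
def Relevant (N k : ℕ) {n : ℕ} (e : Pair n) : Prop := k + 1 ≤ pairLen N e

/-- The 2×2 determinant `det (u v)` of two plane vectors. -/
def det2 (u v : ℝ × ℝ) : ℝ := u.1 * v.2 - u.2 * v.1

/-- Points in convex position, listed in counterclockwise order along their convex hull:
they are distinct and every triple `i<j<k` is positively oriented. -/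
def ConvexPosition {n : ℕ} (q : Fin n → ℝ × ℝ) : Prop :=
  Function.Injective q ∧
  ∀ i j k : Fin n, i < j → j < k → 0 < det2 (q j - q i) (q k - q i)

/-- `p` lies on the line through `a` and `b`. -/
def onLine (a b p : ℝ × ℝ) : Prop := det2 (b - a) (p - a) = 0

/-- Row of the bar-and-joint rigidity matrix `R(p)` indexed by the pair `e`:
`p_i - p_j` in block `i`, `p_j - p_i` in block `j`, zeros elsewhere. -/
def bjRow {n d : ℕ} (p : Fin n → Fin d → ℝ) (e : Pair n) : Fin n × Fin d → ℝ :=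
  fun ma =>
    if ma.1 = e.val.1 then p e.val.1 ma.2 - p e.val.2 ma.2
    else if ma.1 = e.val.2 then p e.val.2 ma.2 - p e.val.1 ma.2
    else 0

/-- Row of the hyperconnectivity matrix `H(p)` indexed by the pair `e`:
`p_j` in block `i`, `-p_i` in block `j`, zeros elsewhere. -/
def hypRow {n d : ℕ} (p : Fin n → Fin d → ℝ) (e : Pair n) : Fin n × Fin d → ℝ :=
  fun ma =>
    if ma.1 = e.val.1 then p e.val.2 ma.2
    else if ma.1 = e.val.2 then - p e.val.1 ma.2
    else 0

/-- The vector `c_{ij} = ((x_i-x_j)^{d-1}, (x_i-x_j)^{d-2}(y_i-y_j), …, (y_i-y_j)^{d-1})`. -/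
def cvec (d : ℕ) (qi qj : ℝ × ℝ) : Fin d → ℝ :=
  fun a => (qi.1 - qj.1) ^ (d - 1 - (a : ℕ)) * (qi.2 - qj.2) ^ (a : ℕ)

/-- Row of the cofactor rigidity matrix `C_d(q)` indexed by the pair `e`:
`c_{ij}` in block `i`, `-c_{ij}` in block `j`, zeros elsewhere. -/
def cofRow (d : ℕ) {n : ℕ} (q : Fin n → ℝ × ℝ) (e : Pair n) : Fin n × Fin d → ℝ :=
  fun ma =>
    if ma.1 = e.val.1 then cvec d (q e.val.1) (q e.val.2) ma.2
    else if ma.1 = e.val.2 then - cvec d (q e.val.1) (q e.val.2) ma.2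
    else 0

/-- `x_{ij} = X_i Z_j - Z_i X_j` for vectors in `ℝ³`. -/
def xQ (Qi Qj : ℝ × ℝ × ℝ) : ℝ := Qi.1 * Qj.2.2 - Qi.2.2 * Qj.1

/-- `y_{ij} = Y_i Z_j - Z_i Y_j` for vectors in `ℝ³`. -/
def yQ (Qi Qj : ℝ × ℝ × ℝ) : ℝ := Qi.2.1 * Qj.2.2 - Qi.2.2 * Qj.2.1

/-- The vector `c_{ij} = (x_{ij}^{d-1}, x_{ij}^{d-2} y_{ij}, …, y_{ij}^{d-1})`. -/
def gcvec (d : ℕ) (Qi Qj : ℝ × ℝ × ℝ) : Fin d → ℝ :=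
  fun a => (xQ Qi Qj) ^ (d - 1 - (a : ℕ)) * (yQ Qi Qj) ^ (a : ℕ)

/-- Row of the generalized cofactor rigidity matrix `C_d(Q)` for vectors in `ℝ³`. -/
def gcofRow (d : ℕ) {n : ℕ} (Q : Fin n → ℝ × ℝ × ℝ) (e : Pair n) : Fin n × Fin d → ℝ :=
  fun ma =>
    if ma.1 = e.val.1 then gcvec d (Q e.val.1) (Q e.val.2) ma.2
    else if ma.1 = e.val.2 then - gcvec d (Q e.val.1) (Q e.val.2) ma.2
    else 0

/-- The cone of all nonnegative linear combinations of `{v e : e ∈ S}`. -/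
def coneOf {n : ℕ} {V : Type*} [AddCommGroup V] [Module ℝ V]
    (v : Pair n → V) (S : Set (Pair n)) : Set V :=
  {x | ∃ c : Pair n → ℝ, (∀ e, 0 ≤ c e) ∧ (∀ e, c e ≠ 0 → e ∈ S) ∧ x = ∑ e, c e • v e}

/-- The vectors `(v e)` realize the `k`-associahedron of the `n`-gon as a complete
simplicial fan: (a) the vectors of every `k`-triangulation are linearly independent;
(b) cones of two `k`-triangulations intersect in the cone of their intersection;
(c) the union of all the cones is the linear span of all the vectors. -/
def RealizesFan (n k : ℕ) {V : Type*} [AddCommGroup V] [Module ℝ V]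
    (v : Pair n → V) : Prop :=
  (∀ T : Set (Pair n), IsTriangulation n k T →
      LinearIndependent ℝ (fun e : T => v e.val)) ∧
  (∀ T T' : Set (Pair n), IsTriangulation n k T → IsTriangulation n k T' →
      coneOf v T ∩ coneOf v T' = coneOf v (T ∩ T')) ∧
  (⋃ T ∈ {T : Set (Pair n) | IsTriangulation n k T}, coneOf v T) =
    (Submodule.span ℝ (Set.range v) : Set V)

/-- The set `E = {{i, n+1} : k+1 ≤ i ≤ n-k}` of `k`-relevant pairs of the `(n+1)`-gon using the
vertex `n+1` (0-indexed: pairs `(i, n)` with `k ≤ i ≤ n-k-1`). -/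
def Eset (n k : ℕ) : Set (Pair (n + 1)) :=
  {e | (e.val.2 : ℕ) = n ∧ k ≤ (e.val.1 : ℕ) ∧ (e.val.1 : ℕ) ≤ n - k - 1}

/-- The map sending `T` to the image under `φ({i,j}) = {i, j-1}` of its `k`-relevant pairs not
using vertex `n+1`, together with all pairs of length at most `k-1` in the `(n-1)`-gon. -/
def flattenMap (n k : ℕ) (T : Set (Pair (n + 1))) : Set (Pair (n - 1)) :=
  {f | (∃ e ∈ T, (e.val.2 : ℕ) ≠ n ∧ k + 1 ≤ pairLen (n + 1) e ∧
          (f.val.1 : ℕ) = (e.val.1 : ℕ) ∧ (f.val.2 : ℕ) = (e.val.2 : ℕ) - 1) ∨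
       pairLen (n - 1) f ≤ k - 1}

/-! A set of `m` pairwise crossing pairs of the `n`-gon consists of pairs of length at least `m`,
since every other member has one endpoint on each side of a given one. Hence irrelevant pairs
never take part in a `(k+1)`-crossing and belong to every `k`-triangulation.

With `ψ({i,j}) = {i,j+1}` the inverse of `φ`, flattening a set that contains all irrelevant pairs
is taking its preimage under `ψ`. As `ψ` reaches every relevant pair that avoids the last vertex,
this preimage determines the set once the set contains `E`. Deleting the last member of a
`(k+1)`-crossing and applying `φ` gives a `k`-crossing; conversely, applying `ψ` to a `k`-crossing
and adding the pair that joins its smallest second endpoint to the last vertex gives a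
`(k+1)`-crossing, whose new member is relevant by the length bound and so lies in `E`. Flattening is
therefore an inclusion-preserving correspondence between crossing-free sets, and matches the
maximal ones. -/

section Cross

variable {n : ℕ} {e f : Pair n}

instance Cross.symm : Std.Symm (Cross (n := n)) :=
  ⟨fun _ _ => Or.symm⟩

lemma not_cross_self (e : Pair n) : ¬ Cross e e := by
  simp [Cross]

lemma fst_lt_snd_of_pairwise_cross {C : Set (Pair n)} (hC : C.Pairwise Cross) (he : e ∈ C)
    (hf : f ∈ C) : e.val.1 < f.val.2 := by
  obtain rfl | hne := eq_or_ne e f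
  · exact e.property
  · have := hC he hf hne
    grind [Cross]

lemma injOn_endpoint_of_pairwise_cross {C : Set (Pair n)} (hC : C.Pairwise Cross)
    {endpoint : Pair n → Fin n} (h : ∀ e, endpoint e = e.val.1 ∨ endpoint e = e.val.2) :
    C.InjOn endpoint := by
  intro e he f hf hef
  by_contra hne
  have := hC he hf hne
  grind [Cross]

end Cross

section Length

variable {n : ℕ} {C : Finset (Pair n)} {e : Pair n}

lemma card_le_snd_sub_fst_of_pairwise_cross (hC : (C : Set (Pair n)).Pairwise Cross) (he : e ∈ C) :
    C.card ≤ (e.val.2 : ℕ) - e.val.1 := by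
  let inner (f : Pair n) : Fin n := if e.val.1 < f.val.1 then f.val.1 else f.val.2
  have inner_mem : Set.MapsTo inner (C.erase e) (Finset.Ioo e.val.1 e.val.2) := by
    intro f hf
    have := hC he (Finset.mem_of_mem_erase hf) (Finset.ne_of_mem_erase hf).symm
    grind [Cross]
  have inner_injOn : Set.InjOn inner (C.erase e) :=
    injOn_endpoint_of_pairwise_cross (hC.mono (C.erase_subset e)) (by grind)
  have hcard := Finset.card_le_card_of_injOn inner inner_mem inner_injOn
  rw [Finset.card_erase_of_mem he, Fin.card_Ioo] at hcard
  have := e.property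
  lia

lemma card_add_snd_sub_fst_le_of_pairwise_cross (hC : (C : Set (Pair n)).Pairwise Cross)
    (he : e ∈ C) :
    C.card + ((e.val.2 : ℕ) - e.val.1) ≤ n := by
  let outer (f : Pair n) : Fin n := if e.val.1 < f.val.1 then f.val.2 else f.val.1
  have outer_mem : Set.MapsTo outer (C.erase e)
      ((Finset.Icc e.val.1 e.val.2)ᶜ : Finset (Fin n)) := by
    intro f hf
    have := hC he (Finset.mem_of_mem_erase hf) (Finset.ne_of_mem_erase hf).symm
    grind [Cross, Finset.mem_compl]
  have outer_injOn : Set.InjOn outer (C.erase e) :=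
    injOn_endpoint_of_pairwise_cross (hC.mono (C.erase_subset e)) (by grind)
  have hcard := Finset.card_le_card_of_injOn outer outer_mem outer_injOn
  rw [Finset.card_erase_of_mem he, Finset.card_compl, Fin.card_Icc, Fintype.card_fin] at hcard
  have := e.property
  lia

lemma card_le_pairLen_of_pairwise_cross (hC : (C : Set (Pair n)).Pairwise Cross) (he : e ∈ C) :
    C.card ≤ pairLen n e :=
  le_min (card_le_snd_sub_fst_of_pairwise_cross hC he)
    (Nat.le_sub_of_add_le (card_add_snd_sub_fst_le_of_pairwise_cross hC he))

end Length

section Triangulation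

variable {n k : ℕ}

/-- The pairs of the `n`-gon that are not `k`-relevant, i.e. of length at most `k`; they lie in
every `k`-triangulation. -/
def irrelevantPairs (n k : ℕ) : Set (Pair n) :=
  {e | ¬ Relevant n k e}

lemma CrossingFree.union_irrelevantPairs {S : Set (Pair n)} (hS : CrossingFree n k S) :
    CrossingFree n k (S ∪ irrelevantPairs n k) := by
  rintro ⟨C, hCS, hcard, hC⟩
  refine hS ⟨C, fun e he => ?_, hcard, hC⟩
  have hrel : Relevant n k e := hcard.ge.trans (card_le_pairLen_of_pairwise_cross hC he)
  exact (hCS he).resolve_right (not_not_intro hrel)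

lemma IsTriangulation.irrelevantPairs_subset {T : Set (Pair n)} (hT : IsTriangulation n k T) :
    irrelevantPairs n k ⊆ T :=
  Set.union_eq_left.mp (hT.2 _ hT.1.union_irrelevantPairs Set.subset_union_left)

lemma isTriangulation_and_subset_iff_maximal {T B : Set (Pair n)} :
    IsTriangulation n k T ∧ B ⊆ T ↔
      Maximal (fun S => CrossingFree n k S ∧ irrelevantPairs n k ⊆ S ∧ B ⊆ S) T := by
  constructor
  · rintro ⟨hT, hB⟩
    exact ⟨⟨hT.1, hT.irrelevantPairs_subset, hB⟩, fun S hS hTS => (hT.2 S hS.1 hTS).le⟩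
  · rintro ⟨⟨hT, hirr, hB⟩, hmax⟩
    refine ⟨⟨hT, fun S hS hTS => ?_⟩, hB⟩
    exact (hmax ⟨hS, hirr.trans hTS, hB.trans hTS⟩ hTS).antisymm hTS

lemma isTriangulation_iff_maximal {T : Set (Pair n)} :
    IsTriangulation n k T ↔
      Maximal (fun S => CrossingFree n k S ∧ irrelevantPairs n k ⊆ S) T := by
  simpa using isTriangulation_and_subset_iff_maximal (T := T) (B := ∅)

end Triangulation

section Inflate

variable {n k : ℕ}

/-- The inverse `{i, j} ↦ {i, j + 1}` of the map `φ`, as a map from the pairs of the `n`-gon to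
those of the `(n + 2)`-gon. Unlike `φ`, it is defined on all pairs. -/
def Pair.inflate (e : Pair n) : Pair (n + 2) :=
  ⟨(e.val.1.castAdd 2, e.val.2.succ.castSucc),
    Fin.lt_def.mpr (Nat.lt_succ_of_lt (Fin.lt_def.mp e.property))⟩

lemma val_fst_inflate (e : Pair n) : (e.inflate.val.1 : ℕ) = e.val.1 :=
  rfl

lemma val_snd_inflate (e : Pair n) : (e.inflate.val.2 : ℕ) = e.val.2 + 1 :=
  rfl

lemma inflate_eq_iff {e : Pair n} {f : Pair (n + 2)} :
    e.inflate = f ↔ (e.val.1 : ℕ) = f.val.1 ∧ (e.val.2 : ℕ) + 1 = f.val.2 := by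
  simp only [Subtype.ext_iff, Prod.ext_iff, Fin.ext_iff, val_fst_inflate, val_snd_inflate]

lemma inflate_injective : Function.Injective (Pair.inflate : Pair n → Pair (n + 2)) := by
  intro e f h
  obtain ⟨h₁, h₂⟩ := inflate_eq_iff.mp h
  exact Subtype.ext (Prod.ext (Fin.ext h₁) (Fin.ext (Nat.succ_injective h₂)))

lemma mem_range_inflate_iff {e : Pair (n + 2)} :
    e ∈ Set.range Pair.inflate ↔ (e.val.1 : ℕ) + 1 < e.val.2 ∧ (e.val.2 : ℕ) ≠ n + 1 := by
  constructor
  · rintro ⟨f, rfl⟩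
    have := f.property
    simp only [val_fst_inflate, val_snd_inflate]
    lia
  · rintro ⟨hlt, hne⟩
    refine ⟨⟨(⟨e.val.1, by lia⟩, ⟨e.val.2 - 1, by lia⟩), Fin.lt_def.mpr (by lia)⟩, ?_⟩
    exact inflate_eq_iff.mpr ⟨rfl, Nat.sub_add_cancel (by lia)⟩

lemma relevant_inflate_iff {e : Pair n} :
    Relevant (n + 2) (k + 1) e.inflate ↔ Relevant n k e := by
  simp only [Relevant, pairLen, val_fst_inflate, val_snd_inflate]
  have := e.property
  lia

lemma Relevant.mem_range_inflate {e : Pair (n + 2)} (h : Relevant (n + 2) (k + 1) e)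
    (hne : (e.val.2 : ℕ) ≠ n + 1) : e ∈ Set.range Pair.inflate := by
  rw [mem_range_inflate_iff]
  simp only [Relevant, pairLen] at h
  lia

lemma Cross.inflate {e f : Pair n} (h : Cross e f) : Cross e.inflate f.inflate := by
  simp only [Cross, Fin.lt_def, val_fst_inflate, val_snd_inflate] at h ⊢
  lia

lemma mem_Eset_iff {e : Pair (n + 1)} :
    e ∈ Eset n k ↔ (e.val.2 : ℕ) = n ∧ Relevant (n + 1) k e := by
  have := e.property
  simp only [Eset, Relevant, pairLen, Set.mem_ofPred_eq]
  lia

lemma mem_flattenMap_iff {T : Set (Pair (n + 2))} {f : Pair n} :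
    f ∈ flattenMap (n + 1) (k + 1) T ↔ (Relevant n k f → f.inflate ∈ T) := by
  constructor
  · rintro (⟨e, he, -, -, h₁, h₂⟩ | hlen) hf
    · have hpos : 0 < (e.val.2 : ℕ) := Nat.zero_lt_of_lt e.property
      have hfe : f.inflate = e :=
        inflate_eq_iff.mpr ⟨h₁, ((Nat.sub_eq_iff_eq_add hpos).mp h₂.symm).symm⟩
      exact hfe ▸ he
    · exact absurd hlen (Nat.not_le.mpr hf)
  · intro h
    by_cases hf : Relevant n k f
    · have hne : (f.inflate.val.2 : ℕ) ≠ n + 1 := (mem_range_inflate_iff.mp ⟨f, rfl⟩).2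
      exact Or.inl ⟨f.inflate, h hf, hne, relevant_inflate_iff.mpr hf, rfl, rfl⟩
    · exact Or.inr (Nat.lt_succ_iff.mp (Nat.not_le.mp hf))

lemma flattenMap_eq_preimage_inflate {T : Set (Pair (n + 2))}
    (hT : irrelevantPairs (n + 2) (k + 1) ⊆ T) :
    flattenMap (n + 1) (k + 1) T = Pair.inflate ⁻¹' T := by
  ext f
  rw [mem_flattenMap_iff, Set.mem_preimage]
  refine ⟨fun h => ?_, fun h _ => h⟩
  by_cases hf : Relevant n k f
  · exact h hf
  · exact hT (relevant_inflate_iff.not.mpr hf)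

lemma flattenMap_subset_flattenMap_iff {S T : Set (Pair (n + 2))}
    (hS : irrelevantPairs (n + 2) (k + 1) ⊆ S) (hT : irrelevantPairs (n + 2) (k + 1) ⊆ T)
    (hE : Eset (n + 1) (k + 1) ⊆ T) :
    flattenMap (n + 1) (k + 1) S ⊆ flattenMap (n + 1) (k + 1) T ↔ S ⊆ T := by
  rw [flattenMap_eq_preimage_inflate hS, flattenMap_eq_preimage_inflate hT]
  refine ⟨fun h e he => ?_, Set.preimage_mono⟩
  by_cases hrel : Relevant (n + 2) (k + 1) e
  · by_cases hlast : (e.val.2 : ℕ) = n + 1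
    · exact hE (mem_Eset_iff.mpr ⟨hlast, hrel⟩)
    · obtain ⟨f, rfl⟩ := hrel.mem_range_inflate hlast
      exact h he
  · exact hT hrel

lemma exists_preimage_inflate_eq {T : Set (Pair n)} (hT : irrelevantPairs n k ⊆ T) :
    ∃ S, irrelevantPairs (n + 2) (k + 1) ⊆ S ∧ Eset (n + 1) (k + 1) ⊆ S ∧
      Pair.inflate ⁻¹' S = T := by
  refine ⟨irrelevantPairs (n + 2) (k + 1) ∪ Eset (n + 1) (k + 1) ∪ Pair.inflate '' T,
    fun e he => Or.inl (Or.inl he), fun e he => Or.inl (Or.inr he), ?_⟩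
  have preimage_irrelevantPairs :
      Pair.inflate ⁻¹' irrelevantPairs (n + 2) (k + 1) = irrelevantPairs n k :=
    Set.ext fun _ => relevant_inflate_iff.not
  have preimage_Eset : Pair.inflate ⁻¹' Eset (n + 1) (k + 1) = ∅ :=
    Set.eq_empty_of_forall_notMem fun f hf => (mem_range_inflate_iff.mp ⟨f, rfl⟩).2 hf.1
  rw [Set.preimage_union, Set.preimage_union, preimage_irrelevantPairs, preimage_Eset,
    Set.preimage_image_eq T inflate_injective, Set.union_empty, Set.union_eq_right.mpr hT]

end Inflate

section CrossingFree

variable {n k : ℕ}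

lemma exists_last_forall_cross_inflate {C : Finset (Pair n)} (hne : C.Nonempty)
    (hC : (C : Set (Pair n)).Pairwise Cross) :
    ∃ s : Pair (n + 2), (s.val.2 : ℕ) = n + 1 ∧ ∀ e ∈ C, Cross e.inflate s := by
  obtain ⟨e₀, he₀, hmin⟩ := C.exists_min_image (fun e => e.val.2) hne
  refine ⟨⟨(e₀.val.2.castAdd 2, Fin.last (n + 1)), Fin.lt_def.mpr (by simp)⟩, rfl, ?_⟩
  intro e he
  have h₁ := fst_lt_snd_of_pairwise_cross hC he he₀
  have h₂ := hmin e he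
  left
  simp only [Fin.lt_def, val_fst_inflate, val_snd_inflate, Fin.val_castAdd, Fin.val_last]
  lia

lemma pairwise_cross_insert_image_inflate {C : Set (Pair n)} (hC : C.Pairwise Cross)
    {s : Pair (n + 2)} (hs : ∀ e ∈ C, Cross e.inflate s) :
    (insert s (Pair.inflate '' C)).Pairwise Cross := by
  rw [Set.pairwise_insert_of_symm, inflate_injective.injOn.pairwise_image]
  refine ⟨hC.mono' fun _ _ => Cross.inflate, ?_⟩
  rintro _ ⟨e, he, rfl⟩ -
  exact Std.Symm.symm _ _ (hs e he)

lemma CrossingFree.preimage_inflate {S : Set (Pair (n + 2))}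
    (hS : CrossingFree (n + 2) (k + 1) S) (hE : Eset (n + 1) (k + 1) ⊆ S) :
    CrossingFree n k (Pair.inflate ⁻¹' S) := by
  classical
  rintro ⟨C, hCS, hcard, hC⟩
  obtain ⟨s, hlast, hs⟩ :=
    exists_last_forall_cross_inflate (Finset.card_pos.mp (by lia)) hC
  have hs_notMem : s ∉ C.image Pair.inflate := by
    intro h
    obtain ⟨e, he, rfl⟩ := Finset.mem_image.mp h
    exact not_cross_self _ (hs e he)
  set D := insert s (C.image Pair.inflate) with hD
  have hD_coe : (D : Set (Pair (n + 2))) = insert s (Pair.inflate '' C) := by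
    rw [hD, Finset.coe_insert, Finset.coe_image]
  have hD_pairwise : (D : Set (Pair (n + 2))).Pairwise Cross :=
    hD_coe ▸ pairwise_cross_insert_image_inflate hC hs
  have hD_card : D.card = k + 2 := by
    rw [Finset.card_insert_of_notMem hs_notMem,
      Finset.card_image_of_injective C inflate_injective, hcard]
  have hs_relevant : Relevant (n + 2) (k + 1) s :=
    hD_card.ge.trans
      (card_le_pairLen_of_pairwise_cross hD_pairwise (Finset.mem_insert_self _ _))
  refine hS ⟨D, ?_, hD_card, hD_pairwise⟩
  rw [hD_coe, Set.insert_subset_iff, Set.image_subset_iff]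
  exact ⟨hE (mem_Eset_iff.mpr ⟨hlast, hs_relevant⟩), hCS⟩

lemma CrossingFree.of_preimage_inflate {S : Set (Pair (n + 2))}
    (hS : CrossingFree n k (Pair.inflate ⁻¹' S)) : CrossingFree (n + 2) (k + 1) S := by
  classical
  rintro ⟨C, hCS, hcard, hC⟩
  obtain ⟨l, hl, hmax⟩ :=
    C.exists_max_image (fun e => e.val.2) (Finset.card_pos.mp (by lia))
  have hlast : ∀ e ∈ C.erase l, e.val.1 < l.val.1 ∧ l.val.1 < e.val.2 ∧ e.val.2 < l.val.2 := by
    intro e he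
    have := hmax e (Finset.mem_of_mem_erase he)
    have := hC e (Finset.mem_of_mem_erase he) l hl (Finset.ne_of_mem_erase he)
    grind [Cross]
  have hrange : ∀ e ∈ C.erase l, e ∈ Set.range Pair.inflate := by
    intro e he
    have := hlast e he
    rw [mem_range_inflate_iff]
    lia
  refine hS ⟨(C.erase l).preimage Pair.inflate inflate_injective.injOn, ?_, ?_, ?_⟩
  · intro e he
    exact hCS (Finset.mem_of_mem_erase (Finset.mem_preimage.mp he))
  · rw [Finset.card_preimage, Finset.filter_true_of_mem hrange, Finset.card_erase_of_mem hl]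
    lia
  · intro e he f hf hef
    have he := Finset.mem_preimage.mp he
    have hf := Finset.mem_preimage.mp hf
    have he_last := hlast _ he
    have hf_last := hlast _ hf
    have hcross := hC _ (Finset.mem_of_mem_erase he) _ (Finset.mem_of_mem_erase hf)
      (inflate_injective.ne hef)
    simp only [Cross, Fin.lt_def, val_fst_inflate, val_snd_inflate]
      at he_last hf_last hcross ⊢
    lia

lemma exists_flattenMap_eq_iff {T : Set (Pair n)} :
    (∃ S, (CrossingFree (n + 2) (k + 1) S ∧ irrelevantPairs (n + 2) (k + 1) ⊆ S ∧
        Eset (n + 1) (k + 1) ⊆ S) ∧ flattenMap (n + 1) (k + 1) S = T) ↔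
      CrossingFree n k T ∧ irrelevantPairs n k ⊆ T := by
  constructor
  · rintro ⟨S, ⟨hS, hirr, hE⟩, rfl⟩
    rw [flattenMap_eq_preimage_inflate hirr]
    exact ⟨hS.preimage_inflate hE, fun f hf => hirr (relevant_inflate_iff.not.mpr hf)⟩
  · rintro ⟨hT, hirr⟩
    obtain ⟨S, hirrS, hE, rfl⟩ := exists_preimage_inflate_eq hirr
    exact ⟨S, ⟨hT.of_preimage_inflate, hirrS, hE⟩, flattenMap_eq_preimage_inflate hirrS⟩

end CrossingFree

theorem stmt7_general (k n : ℕ) :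
    Set.BijOn (flattenMap (n + 1) (k + 1))
      {T : Set (Pair (n + 2)) |
        IsTriangulation (n + 2) (k + 1) T ∧ Eset (n + 1) (k + 1) ⊆ T}
      {T' : Set (Pair n) | IsTriangulation n k T'} := by
  let P (S : Set (Pair (n + 2))) : Prop := CrossingFree (n + 2) (k + 1) S ∧
    irrelevantPairs (n + 2) (k + 1) ⊆ S ∧ Eset (n + 1) (k + 1) ⊆ S
  have subset_iff ⦃S T⦄ (hS : P S) (hT : P T) :
      flattenMap (n + 1) (k + 1) S ⊆ flattenMap (n + 1) (k + 1) T ↔ S ⊆ T :=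
    flattenMap_subset_flattenMap_iff hS.2.1 hT.2.1 hT.2.2
  have injOn : Set.InjOn (flattenMap (n + 1) (k + 1)) {T | Maximal P T} :=
    fun S hS T hT h => ((subset_iff hS.1 hT.1).mp h.le).antisymm ((subset_iff hT.1 hS.1).mp h.ge)
  have image_eq : flattenMap (n + 1) (k + 1) '' {T | Maximal P T} =
      {T' : Set (Pair n) | IsTriangulation n k T'} := by
    rw [image_monotone_setOfPred_maximal subset_iff]
    simp only [P, isTriangulation_iff_maximal, ← exists_flattenMap_eq_iff]
    rfl
  simp only [isTriangulation_and_subset_iff_maximal]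
  exact image_eq ▸ injOn.bijOn_image

/-- For `k ≥ 2` and `n ≥ 2k+1`, flattening is a bijection from the
`k`-triangulations of the `(n+1)`-gon containing `E` onto the `(k-1)`-triangulations of the
`(n-1)`-gon. -/
theorem stmt7 (k n : ℕ) (hk : 2 ≤ k) (hn : 2 * k + 1 ≤ n) :
    Set.BijOn (flattenMap n k)
      {T : Set (Pair (n + 1)) | IsTriangulation (n + 1) k T ∧ Eset n k ⊆ T}
      {T' : Set (Pair (n - 1)) | IsTriangulation (n - 1) (k - 1) T'} := by
  obtain ⟨k, rfl⟩ := Nat.exists_eq_add_of_le' (one_le_two.trans hk)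
  obtain ⟨n, rfl⟩ := Nat.exists_eq_add_of_le' (show 1 ≤ n by lia)
  exact stmt7_general k n
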